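/- For all n, m ≥ 1 and every family X = (X^{k,l}) of complex I₁×I₂ matrices indexed by 1 ≤ k ≤ n, 1 ≤ l ≤ m, the fourth-order block Toeplitz-plus-Hankel matrix of X is block-diagonalized: (C_m ⊗ C_n ⊗ I_{I₁}) · btph(X) · (C_mᵀ ⊗ C_nᵀ ⊗ I_{I₂}) equals the block-diagonal matrix whose ((l−1)n+k)-th diagonal block is X̂^{k,l} = ∑_{k'=1}^n ∑_{l'=1}^m (M_n)_{k,k'} (M_m)_{l,l'} X^{k',l'}. -/

import Mathlib

open Matrix Kronecker

noncomputable section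

/-- The discrete cosine transform (DCT) matrix `C_n`. -/
def dctMatrix (n : ℕ) : Matrix (Fin n) (Fin n) ℝ :=
  Matrix.of fun i j =>
    Real.sqrt ((2 - if (i : ℕ) = 0 then (1 : ℝ) else 0) / n) *
      Real.cos ((i : ℕ) * (2 * (j : ℕ) + 1) * Real.pi / (2 * n))

/-- Toeplitz-plus-Hankel selector (0-based indexing). -/
def thSelect {m : ℕ} {β : Type*} [AddCommMonoid β] (B : Fin m → β) (i j : Fin m) : β :=
  B ⟨(((i : ℕ) : ℤ) - ((j : ℕ) : ℤ)).natAbs, by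
      have hi := i.isLt; have hj := j.isLt; omega⟩ +
  (if h1 : (i : ℕ) + (j : ℕ) + 2 ≤ m then
      B ⟨(i : ℕ) + (j : ℕ) + 1, by omega⟩
   else if h2 : (i : ℕ) + (j : ℕ) + 2 = m + 1 then 0
   else
      B ⟨2 * m - 1 - ((i : ℕ) + (j : ℕ)), by
        have hi := i.isLt; have hj := j.isLt; omega⟩)

/-- The block Toeplitz-plus-Hankel matrix `btph(A)` of a family of `I₁×I₂` matrices. -/
def btph {n I₁ I₂ : ℕ} (A : Fin n → Matrix (Fin I₁) (Fin I₂) ℂ) :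
    Matrix (Fin n × Fin I₁) (Fin n × Fin I₂) ℂ :=
  Matrix.of fun p q => thSelect A p.1 q.1 p.2 q.2

/-- The fourth-order block Toeplitz-plus-Hankel matrix of a family
`X = (X^{k,l})` of `I₁×I₂` matrices: blocks over `l`, with block `B_l = btph(X_{·,l})`. -/
def btph4 {n m I₁ I₂ : ℕ} (X : Fin n → Fin m → Matrix (Fin I₁) (Fin I₂) ℂ) :
    Matrix (Fin m × (Fin n × Fin I₁)) (Fin m × (Fin n × Fin I₂)) ℂ :=
  Matrix.of fun p q => thSelect (fun l => btph fun k => X k l) p.1 q.1 p.2 q.2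

/-- `W_n`: the diagonal matrix whose diagonal is the first column of `C_n`. -/
def Wmat (n : ℕ) : Matrix (Fin n) (Fin n) ℝ :=
  Matrix.diagonal fun i => dctMatrix n i ⟨0, i.pos⟩

/-- `Z_n`: the upshift matrix. -/
def Zmat (n : ℕ) : Matrix (Fin n) (Fin n) ℝ :=
  Matrix.of fun i j => if (i : ℕ) + 1 = (j : ℕ) then 1 else 0

/-- `M_n = W_n⁻¹ C_n (I_n + Z_n)`. -/
def Mmat (n : ℕ) : Matrix (Fin n) (Fin n) ℝ :=
  (Wmat n)⁻¹ * dctMatrix n * (1 + Zmat n)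

/-! Write `E_k` for the Toeplitz-plus-Hankel matrix of the `k`-th unit family. Acting on the
restriction to `0, …, n - 1` of a sequence `f` on `ℤ` that is symmetric about `-1/2` and about
`n - 1/2`, it returns `f (i + k) + f (i - k)` (and `f i` when `k = 0`): the Hankel part supplies
exactly the values lost beyond the boundary. The rows of `C_n` are such sequences, and
`cos (x + y) + cos (x - y) = 2 cos y cos x` makes them eigenvectors of every `E_k`. Since the row of
`E_k` at `0` is the column `k` of `I + Z_n`, the eigenvalues are the entries of `M_n`. As `C_n` is
orthogonal, conjugation by it diagonalizes one level of blocks; apply this twice. -/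

section MirrorImages

/-- The half-sample symmetric sequences of the DCT-II: symmetric about `-1/2` and `n - 1/2`. -/
structure HalfSampleSymmetric {α : Type*} (n : ℕ) (f : ℤ → α) : Prop where
  reflect_left (t : ℤ) : f (-1 - t) = f t
  reflect_right (t : ℤ) : f (2 * n - 1 - t) = f t

/-- A position `t` together with its reflections in the two axes of a half-sample symmetric
sequence. It is used for `-n ≤ t < 2 * n`, where one reflection suffices to land in `[0, n)`. -/
def mirrorImages (n : ℕ) (t : ℤ) : Finset ℤ :=
  {t, -1 - t, 2 * n - 1 - t}

lemma HalfSampleSymmetric.eq_of_mem_mirrorImages {α : Type*} {n : ℕ} {f : ℤ → α}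
    (hf : HalfSampleSymmetric n f) {s t : ℤ} (hs : s ∈ mirrorImages n t) : f s = f t := by
  simp only [mirrorImages, Finset.mem_insert, Finset.mem_singleton] at hs
  rcases hs with rfl | rfl | rfl
  exacts [rfl, hf.reflect_left t, hf.reflect_right t]

lemma existsUnique_mem_mirrorImages {n : ℕ} {t : ℤ} (ht : -n ≤ t) (ht' : t < 2 * n) :
    ∃! j : Fin n, (j : ℤ) ∈ mirrorImages n t := by
  simp only [mirrorImages, Finset.mem_insert, Finset.mem_singleton]
  obtain h | ⟨h, h'⟩ | h : t < 0 ∨ (0 ≤ t ∧ t < n) ∨ n ≤ t := by omega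
  · exact ⟨⟨(-1 - t).toNat, by omega⟩, by simp only; omega,
      fun j hj => Fin.ext (by simp only; omega)⟩
  · exact ⟨⟨t.toNat, by omega⟩, by simp only; omega, fun j hj => Fin.ext (by simp only; omega)⟩
  · exact ⟨⟨(2 * n - 1 - t).toNat, by omega⟩, by simp only; omega,
      fun j hj => Fin.ext (by simp only; omega)⟩

lemma HalfSampleSymmetric.sum_ite_mem_mirrorImages {M : Type*} [AddCommMonoid M] {n : ℕ}
    {f : ℤ → M} (hf : HalfSampleSymmetric n f) {t : ℤ} (ht : -n ≤ t) (ht' : t < 2 * n) :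
    ∑ j : Fin n, (if (j : ℤ) ∈ mirrorImages n t then f j else 0) = f t := by
  obtain ⟨i, hi, hunique⟩ := existsUnique_mem_mirrorImages ht ht'
  have mem_iff (j : Fin n) : (j : ℤ) ∈ mirrorImages n t ↔ j = i :=
    ⟨hunique j, fun h => h ▸ hi⟩
  simp only [mem_iff, Finset.sum_ite_eq', Finset.mem_univ, if_true]
  exact hf.eq_of_mem_mirrorImages hi

end MirrorImages

section ToeplitzHankel

/-- The Toeplitz-plus-Hankel matrix `E_k` generated by the `k`-th unit family. -/
def thBasis (R : Type*) [Semiring R] {n : ℕ} (k : Fin n) : Matrix (Fin n) (Fin n) R :=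
  Matrix.of (thSelect (Pi.single k 1))

/-- The block Toeplitz-plus-Hankel matrix with blocks of any shape over any additive monoid, so that
the blocks may themselves be of this form. -/
def blockToeplitzHankel {S α β : Type*} [AddCommMonoid S] {n : ℕ} (B : Fin n → Matrix α β S) :
    Matrix (Fin n × α) (Fin n × β) S :=
  Matrix.of fun p q => thSelect B p.1 q.1 p.2 q.2

lemma thSelect_eq_sum_thBasis_smul (R : Type*) {M : Type*} [Semiring R] [AddCommMonoid M]
    [Module R M] {n : ℕ} (B : Fin n → M) (i j : Fin n) :
    thSelect B i j = ∑ k, thBasis R k i j • B k := by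
  simp only [thBasis, thSelect, Matrix.of_apply, Pi.single_apply]
  split_ifs <;> simp [add_smul, Finset.sum_add_distrib]

lemma blockToeplitzHankel_eq_sum_kronecker (R : Type*) {S α β : Type*} [CommSemiring R]
    [Semiring S] [Algebra R S] {n : ℕ} (B : Fin n → Matrix α β S) :
    blockToeplitzHankel B = ∑ k, (thBasis R k).map (algebraMap R S) ⊗ₖ B k := by
  ext p q
  simp only [blockToeplitzHankel, thSelect_eq_sum_thBasis_smul R B, Matrix.of_apply,
    Matrix.sum_apply, Matrix.smul_apply, Matrix.kroneckerMap_apply, Matrix.map_apply,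
    Algebra.smul_def]

variable {R : Type*} [Semiring R] {n : ℕ}

lemma thBasis_eq_one {k : Fin n} (hk : (k : ℕ) = 0) : thBasis R k = 1 := by
  ext i j
  simp only [thBasis, thSelect, Matrix.of_apply, Pi.single_apply, Matrix.one_apply, Fin.ext_iff]
  split_ifs <;> first | omega | simp

lemma thBasis_apply_of_ne_zero {k : Fin n} (hk : (k : ℕ) ≠ 0) (i j : Fin n) :
    thBasis R k i j = (if (j : ℤ) ∈ mirrorImages n (i + k) then 1 else 0) +
      (if (j : ℤ) ∈ mirrorImages n (i - k) then 1 else 0) := by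
  simp only [thBasis, thSelect, Matrix.of_apply, Pi.single_apply, Fin.ext_iff, mirrorImages,
    Finset.mem_insert, Finset.mem_singleton]
  split_ifs <;> first | omega | simp

lemma thBasis_zero_apply (k i : Fin n) :
    thBasis ℝ k ⟨0, k.pos⟩ i = (1 + Zmat n) i k := by
  simp only [thBasis, thSelect, Zmat, Matrix.add_apply, Matrix.one_apply, Matrix.of_apply,
    Pi.single_apply, Fin.ext_iff]
  split_ifs <;> first | omega | simp

lemma HalfSampleSymmetric.sum_thBasis_mul {f : ℤ → R} (hf : HalfSampleSymmetric n f)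
    (k i : Fin n) :
    ∑ j, thBasis R k i j * f j = if (k : ℕ) = 0 then f i else f (i + k) + f (i - k) := by
  split_ifs with hk
  · simp [thBasis_eq_one hk, Matrix.one_apply]
  · simp only [thBasis_apply_of_ne_zero hk, add_mul, ite_mul, one_mul, zero_mul,
      Finset.sum_add_distrib]
    rw [hf.sum_ite_mem_mirrorImages (by omega) (by omega),
      hf.sum_ite_mem_mirrorImages (by omega) (by omega)]

end ToeplitzHankel

section CosineMode

/-- The cosine of frequency `d` sampled at the half-integers, extended to all of `ℤ`. Row `i` of
`C_n` is a multiple of the mode `d = i`; other integers `d` arise from products of modes. -/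
def cosineMode (n : ℕ) (d t : ℤ) : ℝ :=
  Real.cos (d * (2 * t + 1) * Real.pi / (2 * n))

lemma halfSampleSymmetric_cosineMode {n : ℕ} (hn : n ≠ 0) (d : ℤ) :
    HalfSampleSymmetric n (cosineMode n d) where
  reflect_left t := by
    rw [cosineMode, cosineMode, ← Real.cos_neg]
    push_cast
    ring_nf
  reflect_right t := by
    rw [cosineMode, cosineMode, ← Real.cos_int_mul_two_pi_sub _ d]
    push_cast
    congr 1
    field_simp
    ring

lemma cosineMode_add_add_cosineMode_sub (n : ℕ) (d t s : ℤ) :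
    cosineMode n d (t + s) + cosineMode n d (t - s) =
      2 * Real.cos (d * s * Real.pi / n) * cosineMode n d t := by
  rw [mul_right_comm 2, cosineMode, cosineMode, cosineMode, Real.two_mul_cos_mul_cos, add_comm]
  push_cast
  ring_nf

lemma two_mul_cosineMode_mul_cosineMode (n : ℕ) (d e t : ℤ) :
    2 * cosineMode n d t * cosineMode n e t =
      cosineMode n (d - e) t + cosineMode n (d + e) t := by
  simp only [cosineMode, Real.two_mul_cos_mul_cos]
  push_cast
  ring_nf

lemma sum_cosineMode_zero (n : ℕ) : ∑ j : Fin n, cosineMode n 0 j = n := by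
  simp [cosineMode]

lemma sum_cosineMode_of_not_dvd {n : ℕ} {d : ℤ} (hd : ¬ (2 * n : ℤ) ∣ d) :
    ∑ j : Fin n, cosineMode n d j = 0 := by
  rcases eq_or_ne n 0 with rfl | hn
  · simp
  have step_ne (k : ℤ) : d * Real.pi / n ≠ k * (2 * Real.pi) := by
    intro h
    field_simp at h
    have d_eq : (d : ℝ) = 2 * n * k := by linarith
    exact hd ⟨k, by exact_mod_cast d_eq⟩
  have phase_eq (j : ℕ) : (d * (2 * j + 1) * Real.pi / (2 * n) : ℝ) =
      d * Real.pi / n * j + d * Real.pi / (2 * n) := by ring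
  have sin_mul_cos : Real.sin (d * Real.pi / 2) * Real.cos (d * Real.pi / 2) = 0 := by
    have h := Real.sin_two_mul (d * Real.pi / 2)
    rw [mul_div_cancel₀ _ two_ne_zero, Real.sin_int_mul_pi] at h
    linarith
  simp only [cosineMode, Int.cast_natCast, phase_eq]
  rw [Fin.sum_univ_eq_sum_range
    (fun j => Real.cos (d * Real.pi / n * j + d * Real.pi / (2 * n))), Real.sum_cos n step_ne]
  have half_range : (n * (d * Real.pi / n) / 2 : ℝ) = d * Real.pi / 2 := by field_simp
  have mid_phase : ((n - 1) * (d * Real.pi / n) / 2 + d * Real.pi / (2 * n) : ℝ) =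
      d * Real.pi / 2 := by
    field_simp
    ring
  rw [half_range, mid_phase, sin_mul_cos, zero_div]

lemma sum_cosineMode_mul_cosineMode {n : ℕ} (a b : Fin n) :
    ∑ j : Fin n, cosineMode n a j * cosineMode n b j =
      if a = b then (if (a : ℕ) = 0 then (n : ℝ) else n / 2) else 0 := by
  have product_to_sum : 2 * ∑ j : Fin n, cosineMode n a j * cosineMode n b j =
      ∑ j : Fin n, cosineMode n (a - b) j + ∑ j : Fin n, cosineMode n (a + b) j := by
    simp only [Finset.mul_sum, ← mul_assoc, two_mul_cosineMode_mul_cosineMode,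
      Finset.sum_add_distrib]
  have sum_eq_zero {d : ℤ} (hd : d ≠ 0) (hd' : |d| < 2 * n) :
      ∑ j : Fin n, cosineMode n d j = 0 :=
    sum_cosineMode_of_not_dvd fun h => hd (Int.eq_zero_of_abs_lt_dvd h hd')
  split_ifs with hab ha
  · subst hab
    simp only [ha, Nat.cast_zero, sub_zero, add_zero, sum_cosineMode_zero] at product_to_sum ⊢
    linarith
  · subst hab
    rw [sub_self, sum_cosineMode_zero, sum_eq_zero (by omega) (by rw [abs_lt]; omega)]
      at product_to_sum
    linarith
  · rw [Fin.ext_iff] at hab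
    rw [sum_eq_zero (by omega) (by rw [abs_lt]; omega),
      sum_eq_zero (by omega) (by rw [abs_lt]; omega)] at product_to_sum
    linarith

end CosineMode

section DCT

/-- The factor that normalizes the `i`-th cosine mode to a row of `C_n`. -/
def dctScale {n : ℕ} (i : Fin n) : ℝ :=
  √((2 - if (i : ℕ) = 0 then 1 else 0) / n)

lemma dctScale_pos {n : ℕ} (i : Fin n) : 0 < dctScale i :=
  Real.sqrt_pos.2 (div_pos (by split_ifs <;> norm_num) (by exact_mod_cast i.pos))

lemma dctMatrix_apply {n : ℕ} (i j : Fin n) :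
    dctMatrix n i j = dctScale i * cosineMode n i j := by
  simp [dctMatrix, dctScale, cosineMode]

lemma dctScale_sq_mul_sum_cosineMode_sq {n : ℕ} (i : Fin n) :
    dctScale i * dctScale i * ∑ j : Fin n, cosineMode n i j * cosineMode n i j = 1 := by
  have hn : (n : ℝ) ≠ 0 := by exact_mod_cast i.pos.ne'
  rw [sum_cosineMode_mul_cosineMode, if_pos rfl, dctScale,
    Real.mul_self_sqrt (div_nonneg (by split_ifs <;> norm_num) n.cast_nonneg)]
  split_ifs <;> field_simp <;> norm_num

lemma dctMatrix_mul_transpose (n : ℕ) : dctMatrix n * (dctMatrix n)ᵀ = 1 := by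
  ext a b
  simp only [Matrix.mul_apply, Matrix.transpose_apply, dctMatrix_apply,
    mul_mul_mul_comm (dctScale a), ← Finset.mul_sum]
  rcases eq_or_ne a b with rfl | hab
  · rw [dctScale_sq_mul_sum_cosineMode_sq, Matrix.one_apply_eq]
  · rw [sum_cosineMode_mul_cosineMode, if_neg hab, mul_zero, Matrix.one_apply_ne hab]

lemma dctMatrix_zero_pos {n : ℕ} (l : Fin n) : 0 < dctMatrix n l ⟨0, l.pos⟩ := by
  have hn : (0 : ℝ) < n := by exact_mod_cast l.pos
  have hl : ((l : ℕ) : ℝ) < n := by exact_mod_cast l.isLt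
  rw [dctMatrix_apply, cosineMode]
  refine mul_pos (dctScale_pos l) (Real.cos_pos_of_mem_Ioo ⟨?_, ?_⟩)
  · have phase_nonneg : 0 ≤ ((l : ℕ) : ℝ) * Real.pi / (2 * n) := by positivity
    simpa using (neg_neg_of_pos Real.pi_div_two_pos).trans_le phase_nonneg
  · have phase_lt : ((l : ℕ) : ℝ) * Real.pi / (2 * n) < Real.pi / 2 := by
      rw [div_lt_div_iff₀ (by positivity) (by positivity)]
      nlinarith [Real.pi_pos]
    simpa using phase_lt

/-- The eigenvalue of `E_k` on the `l`-th cosine mode. It is the entry `(M_n)_{l,k}`, see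
`Mmat_apply`. -/
def thEigenvalue {n : ℕ} (k l : Fin n) : ℝ :=
  if (k : ℕ) = 0 then 1 else 2 * Real.cos ((l : ℕ) * (k : ℕ) * Real.pi / n)

lemma thBasis_mul_dctMatrix_transpose {n : ℕ} (k : Fin n) :
    thBasis ℝ k * (dctMatrix n)ᵀ = (dctMatrix n)ᵀ * Matrix.diagonal (thEigenvalue k) := by
  ext i l
  have mode_symm := halfSampleSymmetric_cosineMode l.pos.ne' (l : ℤ)
  have mode_eigen : ∑ j, thBasis ℝ k i j * cosineMode n l j =
      cosineMode n l i * thEigenvalue k l := by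
    rw [mode_symm.sum_thBasis_mul, thEigenvalue, cosineMode_add_add_cosineMode_sub]
    split_ifs
    · rw [mul_one]
    · rw [mul_comm, Int.cast_natCast, Int.cast_natCast]
  rw [Matrix.mul_diagonal]
  simp only [Matrix.mul_apply, Matrix.transpose_apply, dctMatrix_apply,
    mul_left_comm _ (dctScale l), ← Finset.mul_sum, mode_eigen, mul_assoc]

lemma Wmat_mul_Mmat (n : ℕ) : Wmat n * Mmat n = dctMatrix n * (1 + Zmat n) := by
  have isUnit_det : IsUnit (Wmat n).det := by
    rw [Wmat, Matrix.det_diagonal, isUnit_iff_ne_zero]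
    exact Finset.prod_ne_zero_iff.2 fun i _ => (dctMatrix_zero_pos i).ne'
  rw [Mmat, Matrix.mul_assoc, Matrix.mul_nonsing_inv_cancel_left _ _ isUnit_det]

lemma Mmat_apply {n : ℕ} (l k : Fin n) : Mmat n l k = thEigenvalue k l := by
  refine mul_left_cancel₀ (dctMatrix_zero_pos l).ne' ?_
  calc dctMatrix n l ⟨0, l.pos⟩ * Mmat n l k
      = (Wmat n * Mmat n) l k := by rw [Wmat, Matrix.diagonal_mul]
    _ = (dctMatrix n * (1 + Zmat n)) l k := by rw [Wmat_mul_Mmat]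
    _ = (thBasis ℝ k * (dctMatrix n)ᵀ) ⟨0, k.pos⟩ l := by
        simp only [Matrix.mul_apply, Matrix.transpose_apply, thBasis_zero_apply, mul_comm]
    _ = dctMatrix n l ⟨0, l.pos⟩ * thEigenvalue k l := by
        rw [thBasis_mul_dctMatrix_transpose, Matrix.mul_diagonal, Matrix.transpose_apply]

lemma dctMatrix_mul_thBasis_mul_transpose {n : ℕ} (k : Fin n) :
    dctMatrix n * thBasis ℝ k * (dctMatrix n)ᵀ = Matrix.diagonal fun l => Mmat n l k := by
  rw [Matrix.mul_assoc, thBasis_mul_dctMatrix_transpose, ← Matrix.mul_assoc,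
    dctMatrix_mul_transpose, Matrix.one_mul]
  simp only [Mmat_apply]

end DCT

section BlockDiagonalization

variable {S : Type*} [CommSemiring S] [Algebra ℝ S]

lemma map_dctMatrix_mul_map_thBasis_mul_transpose {n : ℕ} (k : Fin n) :
    (dctMatrix n).map (algebraMap ℝ S) * (thBasis ℝ k).map (algebraMap ℝ S) *
        ((dctMatrix n).map (algebraMap ℝ S))ᵀ =
      Matrix.diagonal fun l => algebraMap ℝ S (Mmat n l k) := by
  rw [← Matrix.transpose_map, ← Matrix.map_mul, ← Matrix.map_mul,
    dctMatrix_mul_thBasis_mul_transpose, Matrix.diagonal_map (map_zero _)]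

/-- The factors `P` and `Q` are arbitrary so that they can carry the transform of an inner level of
blocks. -/
lemma dctMatrix_kronecker_mul_blockToeplitzHankel_mul {α β γ δ : Type*} [Fintype β] [Fintype γ]
    {n : ℕ} (P : Matrix α β S) (Q : Matrix γ δ S) (B : Fin n → Matrix β γ S) :
    ((dctMatrix n).map (algebraMap ℝ S) ⊗ₖ P) * blockToeplitzHankel B *
        (((dctMatrix n).map (algebraMap ℝ S))ᵀ ⊗ₖ Q) =
      Matrix.of fun p q =>
        if p.1 = q.1 then (∑ k, algebraMap ℝ S (Mmat n p.1 k) • (P * B k * Q)) p.2 q.2 else 0 := by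
  rw [blockToeplitzHankel_eq_sum_kronecker ℝ]
  simp only [Matrix.mul_sum, Matrix.sum_mul, ← Matrix.mul_kronecker_mul,
    map_dctMatrix_mul_map_thBasis_mul_transpose]
  ext p q
  simp only [Matrix.sum_apply, Matrix.kroneckerMap_apply, Matrix.diagonal_apply, Matrix.of_apply,
    Matrix.smul_apply, smul_eq_mul, ite_mul, zero_mul]
  split_ifs
  · rfl
  · exact Finset.sum_const_zero

theorem dct_block_diagonalizes_btph4_general {α β : Type*} [Fintype α] [Fintype β]
    [DecidableEq α] [DecidableEq β] {n m : ℕ} (X : Fin n → Fin m → Matrix α β S) :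
    ((dctMatrix m).map (algebraMap ℝ S) ⊗ₖ
        ((dctMatrix n).map (algebraMap ℝ S) ⊗ₖ (1 : Matrix α α S))) *
        blockToeplitzHankel (fun l => blockToeplitzHankel fun k => X k l) *
      (((dctMatrix m).map (algebraMap ℝ S))ᵀ ⊗ₖ
        (((dctMatrix n).map (algebraMap ℝ S))ᵀ ⊗ₖ (1 : Matrix β β S)))
      = Matrix.of fun p q =>
          if p.1 = q.1 ∧ p.2.1 = q.2.1 then
            (∑ k' : Fin n, ∑ l' : Fin m,
              algebraMap ℝ S (Mmat n p.2.1 k' * Mmat m p.1 l') • X k' l') p.2.2 q.2.2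
          else 0 := by
  simp only [dctMatrix_kronecker_mul_blockToeplitzHankel_mul, Matrix.one_mul, Matrix.mul_one]
  ext p q
  simp only [Matrix.of_apply, Matrix.sum_apply, Matrix.smul_apply, smul_eq_mul, map_mul,
    ite_and]
  split_ifs
  · simp only [Finset.mul_sum]
    rw [Finset.sum_comm]
    simp only [mul_left_comm, mul_assoc]
  · simp only [mul_zero, Finset.sum_const_zero]
  · rfl

end BlockDiagonalization

/-- For all `n, m ≥ 1` and every family `X = (X^{k,l})` of complex `I₁×I₂` matrices:
`(C_m ⊗ C_n ⊗ I_{I₁}) · btph(X) · (C_mᵀ ⊗ C_nᵀ ⊗ I_{I₂})` is the block-diagonal matrix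
whose `(k,l)`-th diagonal block is `X̂^{k,l} = ∑_{k',l'} (M_n)_{k,k'} (M_m)_{l,l'} X^{k',l'}`. -/
theorem dct_block_diagonalizes_btph4 (n m I₁ I₂ : ℕ) (hn : 1 ≤ n) (hm : 1 ≤ m)
    (X : Fin n → Fin m → Matrix (Fin I₁) (Fin I₂) ℂ) :
    ((dctMatrix m).map (Complex.ofReal) ⊗ₖ
        ((dctMatrix n).map (Complex.ofReal) ⊗ₖ (1 : Matrix (Fin I₁) (Fin I₁) ℂ))) * btph4 X *
      (((dctMatrix m).map (Complex.ofReal))ᵀ ⊗ₖ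
        (((dctMatrix n).map (Complex.ofReal))ᵀ ⊗ₖ (1 : Matrix (Fin I₂) (Fin I₂) ℂ)))
      = Matrix.of fun p q =>
          if p.1 = q.1 ∧ p.2.1 = q.2.1 then
            (∑ k' : Fin n, ∑ l' : Fin m,
              ((Mmat n p.2.1 k' * Mmat m p.1 l' : ℝ) : ℂ) • X k' l') p.2.2 q.2.2
          else 0 :=
  dct_block_diagonalizes_btph4_general X
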